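/- Let f be a transcendental meromorphic function or a rational map of degree ≥ 2, let z ∈ Ĉ, R > 0, τ > 0, N ≥ 1, and let 0 < r < R. Then there exists M > 0 such that, for every n ≤ N, all holomorphic inverse branches g of f^{−n} defined on B(z,R) satisfy |Dg| < M on B(z,r); moreover, all but finitely many such inverse branches satisfy |Dg| < τ on B(z,r). Derivatives are taken with respect to the spherical metric. -/

import Mathlib

open Metric MeasureTheory Filter Set Function Topology ENNReal NNReal

noncomputable section
attribute [local instance] Classical.propDecidable

/-- An abstract model of the Riemann sphere `Ĉ`: a compact metric space carrying the
spherical (chordal) metric, an open embedding `ι` of `ℂ` whose complement is the single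
point `infty`, and the inversion `z ↦ 1/z` as a global homeomorphism. -/
structure SphereModel (𝕊 : Type) [MetricSpace 𝕊] [CompactSpace 𝕊] where
  ι : ℂ → 𝕊
  infty : 𝕊
  continuous_ι : Continuous ι
  injective_ι : Function.Injective ι
  range_ι : Set.range ι = {infty}ᶜ
  isOpenMap_ι : IsOpenMap ι
  sphereInv : 𝕊 → 𝕊
  continuous_sphereInv : Continuous sphereInv
  sphereInv_invol : ∀ x, sphereInv (sphereInv x) = x
  sphereInv_ι : ∀ z : ℂ, z ≠ 0 → sphereInv (ι z) = ι z⁻¹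
  sphereInv_zero : sphereInv (ι 0) = infty
  sphereInv_infty : sphereInv infty = ι 0
  dist_ι : ∀ z w : ℂ,
    dist (ι z) (ι w) = 2 * dist z w / (Real.sqrt (1 + ‖z‖ ^ 2) * Real.sqrt (1 + ‖w‖ ^ 2))
  dist_infty : ∀ z : ℂ, dist (ι z) infty = 2 / Real.sqrt (1 + ‖z‖ ^ 2)

namespace SphereModel

variable {𝕊 : Type} [MetricSpace 𝕊] [CompactSpace 𝕊]

/-- The partially defined inverse of `ι` (junk value at `infty`). -/
def toC (S : SphereModel 𝕊) : 𝕊 → ℂ := Function.invFun S.ι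

/-- The standard chart of the sphere around a point: the identity chart away from
`infty` and the chart `z ↦ 1/z` at `infty`. -/
def chart (S : SphereModel 𝕊) (w : 𝕊) : 𝕊 → ℂ :=
  if w = S.infty then S.toC ∘ S.sphereInv else S.toC

/-- Local inverse of `chart`. -/
def chartInv (S : SphereModel 𝕊) (w : 𝕊) : ℂ → 𝕊 :=
  if w = S.infty then S.sphereInv ∘ S.ι else S.ι

/-- `f : 𝕊 → 𝕊` is holomorphic at `x`, read through the standard charts. -/
def HolAt (S : SphereModel 𝕊) (f : 𝕊 → 𝕊) (x : 𝕊) : Prop :=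
  ContinuousAt f x ∧ AnalyticAt ℂ (S.chart (f x) ∘ f ∘ S.chartInv x) (S.chart x x)

/-- `f` represents a meromorphic function `ℂ → Ĉ`: it is holomorphic (as a sphere-valued
map) at every point of `ℂ`.  (The value of `f` at `infty` is junk.) -/
def MeromorphicDyn (S : SphereModel 𝕊) (f : 𝕊 → 𝕊) : Prop :=
  ∀ z : ℂ, S.HolAt f (S.ι z)

/-- `f` represents a transcendental meromorphic function: it is meromorphic on `ℂ` and
admits no holomorphic extension at `infty`. -/
def TranscendentalDyn (S : SphereModel 𝕊) (f : 𝕊 → 𝕊) : Prop :=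
  S.MeromorphicDyn f ∧
    ¬ ∃ g : 𝕊 → 𝕊, (∀ z : ℂ, g (S.ι z) = f (S.ι z)) ∧ S.HolAt g S.infty

/-- `f` represents a rational map of degree at least `2`: holomorphic on the whole sphere,
non-constant and non-injective. -/
def RationalDegGe2 (S : SphereModel 𝕊) (f : 𝕊 → 𝕊) : Prop :=
  (∀ x, S.HolAt f x) ∧ (∀ c, f ≠ fun _ => c) ∧ ¬ Function.Injective f

/-- `f` is a transcendental meromorphic function or a rational map of degree `≥ 2`. -/
def MeroOrRat (S : SphereModel 𝕊) (f : 𝕊 → 𝕊) : Prop :=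
  S.TranscendentalDyn f ∨ S.RationalDegGe2 f

/-- The domain of holomorphy of `f` (`ℂ` for transcendental maps, `Ĉ` for rational ones). -/
def dom (S : SphereModel 𝕊) (f : 𝕊 → 𝕊) : Set 𝕊 := {x | S.HolAt f x}

/-- `f^[n] z` is defined (all earlier iterates lie in the domain of `f`). -/
def DefinedUpTo (S : SphereModel 𝕊) (f : 𝕊 → 𝕊) (z : 𝕊) (n : ℕ) : Prop :=
  ∀ i < n, f^[i] z ∈ S.dom f

/-- The (partially defined) forward orbit of a point. -/
def orb (S : SphereModel 𝕊) (f : 𝕊 → 𝕊) (z : 𝕊) : Set 𝕊 :=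
  {w | ∃ n, S.DefinedUpTo f z n ∧ f^[n] z = w}

/-- The forward orbit of a set. -/
def orbSet (S : SphereModel 𝕊) (f : 𝕊 → 𝕊) (A : Set 𝕊) : Set 𝕊 :=
  ⋃ z ∈ A, S.orb f z

/-- The Fatou set: points with a neighbourhood on which all iterates are defined and form
a normal family (equivalently, on the compact sphere, an equicontinuous family). -/
def fatou (S : SphereModel 𝕊) (f : 𝕊 → 𝕊) : Set 𝕊 :=
  {x | ∃ U ∈ 𝓝 x, (∀ y ∈ U, ∀ n, S.DefinedUpTo f y n) ∧
      EquicontinuousOn (fun n : ℕ => f^[n]) U}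

/-- The Julia set: the complement of the Fatou set. -/
def julia (S : SphereModel 𝕊) (f : 𝕊 → 𝕊) : Set 𝕊 := (S.fatou f)ᶜ

/-- Singular values: `v` is not singular iff it has an open neighbourhood `W` on which
all inverse branches of `f` are well-defined univalent maps. -/
def singularValues (S : SphereModel 𝕊) (f : 𝕊 → 𝕊) : Set 𝕊 :=
  {v | ¬ ∃ W : Set 𝕊, IsOpen W ∧ v ∈ W ∧
      ∀ x ∈ S.dom f, f x ∈ W →
        ∃ g : 𝕊 → 𝕊, ContinuousOn g W ∧ Set.InjOn g W ∧ g (f x) = x ∧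
          ∀ w ∈ W, g w ∈ S.dom f ∧ f (g w) = w}

/-- The post-singular set `P(f)`. -/
def postSingular (S : SphereModel 𝕊) (f : 𝕊 → 𝕊) : Set 𝕊 :=
  closure (S.orbSet f (S.singularValues f))

end SphereModel

/-- The ω-limit set of a point under iteration. -/
def omegaLimitSet {α : Type*} [TopologicalSpace α] (f : α → α) (z : α) : Set α :=
  ⋂ n : ℕ, closure {w | ∃ k, n ≤ k ∧ f^[k] z = w}

/-- A nice set: an open set such that no boundary point ever enters the set. -/
def IsNice {α : Type*} [TopologicalSpace α] (f : α → α) (U : Set α) : Prop :=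
  IsOpen U ∧ ∀ n : ℕ, 0 < n → f^[n] '' frontier U ∩ U = ∅

/-- The norm of the derivative of `f` at `x` with respect to the underlying metric,
defined as the limsup of difference quotients (possibly `∞`). -/
def ednorm {α : Type*} [MetricSpace α] (f : α → α) (x : α) : ℝ≥0∞ :=
  Filter.limsup (fun y => edist (f y) (f x) / edist y x) (𝓝[≠] x)

/-- The norm of the derivative with respect to the Euclidean metric, read through `ι`
(`∞` at `infty` and at poles). -/
def ednormEuc {𝕊 : Type} [MetricSpace 𝕊] [CompactSpace 𝕊] (S : SphereModel 𝕊)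
    (f : 𝕊 → 𝕊) (x : 𝕊) : ℝ≥0∞ :=
  if x = S.infty ∨ f x = S.infty then ⊤
  else ENNReal.ofReal ‖deriv (fun w => S.toC (f (S.ι w))) (S.toC x)‖

/-- The family `𝒱_n(U, z, R)` of pullbacks of `U` by `f^n` that extend univalently over
`B(z,R)`. -/
def pullbackFam {α : Type*} [MetricSpace α] (f : α → α) (U : Set α) (z : α) (R : ℝ)
    (n : ℕ) : Set (Set α) :=
  {V | IsOpen V ∧ f^[n] '' V = U ∧
    ∃ V' : Set α, V ⊆ V' ∧ IsConnected V' ∧ Set.InjOn (f^[n]) V' ∧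
      f^[n] '' V' = Metric.ball z R}

/-- A `(t,p)`-conformal measure for `f`, with respect to the derivative norm `nd`
(spherical or Euclidean): finite on compact sets disjoint from the post-singular set,
with Jacobian `exp p * nd ^ t` wherever the latter is finite (`0 ^ 0 = 1` by the
`ENNReal.rpow` convention), and `m {x} = 0`, `m {f x}` zero or finite whenever
`nd x ^ t = ∞`. -/
def IsConformalMeasure {𝕊 : Type} [MetricSpace 𝕊] [CompactSpace 𝕊] [MeasurableSpace 𝕊]
    (S : SphereModel 𝕊) (f : 𝕊 → 𝕊) (t p : ℝ) (nd : 𝕊 → ℝ≥0∞) (m : Measure 𝕊) : Prop :=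
  (∀ K : Set 𝕊, IsCompact K → Disjoint K (S.postSingular f) → m K < ⊤) ∧
  (∀ A : Set 𝕊, MeasurableSet A → A ⊆ S.dom f → Set.InjOn f A →
      (∀ x ∈ A, nd x ^ t ≠ ⊤) →
      m (f '' A) = ∫⁻ x in A, ENNReal.ofReal (Real.exp p) * nd x ^ t ∂m) ∧
  (∀ x, nd x ^ t = ⊤ → m {x} = 0 ∧ (m {f x} = 0 ∨ m {f x} < ⊤))

/-- The set `E` of univalently inaccessible points. -/
def univInaccessible {𝕊 : Type} [MetricSpace 𝕊] [CompactSpace 𝕊] (S : SphereModel 𝕊)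
    (f : 𝕊 → 𝕊) : Set 𝕊 :=
  {z | ∃ U : Set 𝕊, IsOpen U ∧ (U ∩ S.julia f).Nonempty ∧
    ¬ ∃ (y : 𝕊) (n k : ℕ), y ∈ U ∧ f^[n] z = f^[k] y ∧
      0 < ednorm (f^[n]) z * ednorm (f^[k]) y ∧
      ednorm (f^[n]) z * ednorm (f^[k]) y < ⊤}

/-- A holomorphic inverse branch of `f^{-n}` on `W`. -/
def IsInvBranch {𝕊 : Type} [MetricSpace 𝕊] [CompactSpace 𝕊] (S : SphereModel 𝕊)
    (f : 𝕊 → 𝕊) (n : ℕ) (W : Set 𝕊) (g : 𝕊 → 𝕊) : Prop :=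
  (∀ w ∈ W, S.HolAt g w) ∧ ∀ w ∈ W, f^[n] (g w) = w

/-- The multiplier of `f^[n]` at a point `z`, computed in the standard chart at `z`. -/
def SphereModel.multiplier {𝕊 : Type} [MetricSpace 𝕊] [CompactSpace 𝕊]
    (S : SphereModel 𝕊) (f : 𝕊 → 𝕊) (n : ℕ) (z : 𝕊) : ℂ :=
  deriv (S.chart z ∘ f^[n] ∘ S.chartInv z) (S.chart z z)

/-- A parabolic periodic point: a periodic point whose cycle has multiplier a root of
unity. -/
def IsParabolicPeriodic {𝕊 : Type} [MetricSpace 𝕊] [CompactSpace 𝕊] (S : SphereModel 𝕊)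
    (f : 𝕊 → 𝕊) (z : 𝕊) : Prop :=
  ∃ n : ℕ, 0 < n ∧ f^[n] z = z ∧ ∃ k : ℕ, 0 < k ∧ S.multiplier f n z ^ k = 1

/-- `x` returns to `U` under iteration of `f`. -/
def Returns {α : Type*} (f : α → α) (U : Set α) (x : α) : Prop :=
  ∃ k, 1 ≤ k ∧ f^[k] x ∈ U

/-- The first return time to `U` (junk value `0` if the point never returns). -/
def returnTime {α : Type*} (f : α → α) (U : Set α) (x : α) : ℕ :=
  sInf {k | 1 ≤ k ∧ f^[k] x ∈ U}

/-- The first return map to `U` (the identity where undefined). -/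
def firstReturn {α : Type*} (f : α → α) (U : Set α) (x : α) : α :=
  f^[returnTime f U x] x

/-- The domain of the first return map. -/
def returnDom {α : Type*} (f : α → α) (U : Set α) : Set α :=
  {x ∈ U | Returns f U x}

/-- `Λ_U = ⋂_{k ≥ 0} φ_U^{-k}(U)`: points all of whose iterates under the first return
map are defined (and in `U`). -/
def LambdaSet {α : Type*} (f : α → α) (U : Set α) : Set α :=
  {x | ∀ k : ℕ, (firstReturn f U)^[k] x ∈ returnDom f U}

/-- `φ_U^{-k}(A)`, taking definedness of the first return map into account. -/
def phiPreimage {α : Type*} (f : α → α) (U : Set α) (k : ℕ) (A : Set α) : Set α :=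
  {x | (∀ i < k, (firstReturn f U)^[i] x ∈ returnDom f U) ∧ (firstReturn f U)^[k] x ∈ A}

/-- Euclidean distance from a point of the sphere to a subset of `ℂ` (`∞` at `infty`). -/
def SphereModel.eDistToSet {𝕊 : Type} [MetricSpace 𝕊] [CompactSpace 𝕊]
    (S : SphereModel 𝕊) (y : 𝕊) (B : Set ℂ) : ℝ≥0∞ :=
  if y = S.infty then ⊤ else ENNReal.ofReal (Metric.infDist (S.toC y) B)

/-- Euclidean distance `dist (f z, a)` (junk value `1` at poles, where the true distance
is infinite; note `log (1/1) = 0 = log⁺ (1/∞)`). -/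
def SphereModel.fDist {𝕊 : Type} [MetricSpace 𝕊] [CompactSpace 𝕊] (S : SphereModel 𝕊)
    (f : 𝕊 → 𝕊) (a : ℂ) (z : ℂ) : ℝ :=
  if f (S.ι z) = S.infty then 1 else dist (S.toC (f (S.ι z))) a

/-- Euclidean distance `dist (f z, A)` to a set (junk value `1` at poles). -/
def SphereModel.fDistSet {𝕊 : Type} [MetricSpace 𝕊] [CompactSpace 𝕊] (S : SphereModel 𝕊)
    (f : 𝕊 → 𝕊) (A : Set ℂ) (z : ℂ) : ℝ :=
  if f (S.ι z) = S.infty then 1 else Metric.infDist (S.toC (f (S.ι z))) A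

/-- A subset of the sphere which is a bounded subset of `ℂ`. -/
def SphereModel.BoundedInC {𝕊 : Type} [MetricSpace 𝕊] [CompactSpace 𝕊]
    (S : SphereModel 𝕊) (U : Set 𝕊) : Prop :=
  ∃ B : Set ℂ, Bornology.IsBounded B ∧ U = S.ι '' B

end

namespace SphereModel

variable {𝕊 : Type} [MetricSpace 𝕊] [CompactSpace 𝕊]

/-- Homogeneous coordinates on the sphere. -/
noncomputable def proj (S : SphereModel 𝕊) (x y : ℂ) : 𝕊 :=
  if y = 0 then S.infty else S.ι (x / y)

/-- A rotated parametrisation of the sphere minus a point. -/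
noncomputable def psi (S : SphereModel 𝕊) (p q : ℂ) (u : ℂ) : 𝕊 :=
  S.proj (star q * u + p) (q - star p * u)

/-- The point omitted by `psi`. -/
noncomputable def anti (S : SphereModel 𝕊) (p q : ℂ) : 𝕊 :=
  S.proj (star q) (-star p)

/-- The inverse of `psi`. -/
noncomputable def phi (S : SphereModel 𝕊) (p q : ℂ) (x : 𝕊) : ℂ :=
  open Classical in
  if x = S.infty then q / star p else (q * S.toC x - p) / (star p * S.toC x + star q)

lemma toC_ι (S : SphereModel 𝕊) (a : ℂ) : S.toC (S.ι a) = a :=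
  Function.leftInverse_invFun S.injective_ι a

lemma ι_ne_infty (S : SphereModel 𝕊) (a : ℂ) : S.ι a ≠ S.infty := by
  have : S.ι a ∈ ({S.infty}ᶜ : Set 𝕊) := S.range_ι ▸ Set.mem_range_self a
  simpa using this

lemma exists_ι (S : SphereModel 𝕊) {x : 𝕊} (hx : x ≠ S.infty) : ∃ a, S.ι a = x := by
  have : x ∈ Set.range S.ι := by rw [S.range_ι]; simpa using hx
  exact this

lemma ι_toC (S : SphereModel 𝕊) {x : 𝕊} (hx : x ≠ S.infty) : S.ι (S.toC x) = x := by
  obtain ⟨a, rfl⟩ := S.exists_ι hx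
  rw [toC_ι]

lemma sphereInv_ι_eq (S : SphereModel 𝕊) (a : ℂ) : S.sphereInv (S.ι a) = S.proj 1 a := by
  unfold proj
  split_ifs with h
  · rw [h, S.sphereInv_zero]
  · rw [S.sphereInv_ι a h, one_div]

lemma sqrt_aux (x y : ℂ) (hy : y ≠ 0) :
    Real.sqrt (1 + ‖x / y‖ ^ 2) = Real.sqrt (‖x‖ ^ 2 + ‖y‖ ^ 2) / ‖y‖ := by
  have h : 0 < ‖y‖ := norm_pos_iff.2 hy
  rw [eq_div_iff h.ne', ← Real.sqrt_sq h.le, ← Real.sqrt_mul (by positivity), norm_div,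
    Real.sqrt_sq h.le]
  congr 1
  field_simp
  ring

lemma sq_pos_aux {x y : ℂ} (h : x ≠ 0 ∨ y ≠ 0) : 0 < ‖x‖ ^ 2 + ‖y‖ ^ 2 := by
  rcases h with h | h
  · have := norm_pos_iff.2 h
    positivity
  · have := norm_pos_iff.2 h
    positivity

lemma dist_proj (S : SphereModel 𝕊) {x y x' y' : ℂ} (h : x ≠ 0 ∨ y ≠ 0) (h' : x' ≠ 0 ∨ y' ≠ 0) :
    dist (S.proj x y) (S.proj x' y') = 2 * ‖x * y' - x' * y‖ /
      (Real.sqrt (‖x‖ ^ 2 + ‖y‖ ^ 2) * Real.sqrt (‖x'‖ ^ 2 + ‖y'‖ ^ 2)) := by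
  have key : ∀ {x y x' y' : ℂ}, y ≠ 0 → y' = 0 → x' ≠ 0 → dist (S.proj x y) (S.proj x' y') =
      2 * ‖x * y' - x' * y‖ /
      (Real.sqrt (‖x‖ ^ 2 + ‖y‖ ^ 2) * Real.sqrt (‖x'‖ ^ 2 + ‖y'‖ ^ 2)) := by
    intro x y x' y' hy hy' hx'
    have h1 : 0 < Real.sqrt (‖x‖ ^ 2 + ‖y‖ ^ 2) := Real.sqrt_pos.2 (sq_pos_aux (Or.inr hy))
    have h2 : 0 < ‖y‖ := norm_pos_iff.2 hy
    have h3 : 0 < ‖x'‖ := norm_pos_iff.2 hx'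
    simp only [proj, hy, hy', if_true, if_false]
    rw [S.dist_infty, sqrt_aux x y hy]
    simp
    field_simp
  by_cases hy : y = 0
  · have hx : x ≠ 0 := by tauto
    by_cases hy' : y' = 0
    · simp [proj, hy, hy']
    · rw [dist_comm, key hy' hy hx, ← norm_neg, neg_sub, mul_comm (Real.sqrt _)]
  · by_cases hy' : y' = 0
    · exact key hy hy' (by tauto)
    · have h1 : 0 < Real.sqrt (‖x‖ ^ 2 + ‖y‖ ^ 2) := Real.sqrt_pos.2 (sq_pos_aux h)
      have h1' : 0 < Real.sqrt (‖x'‖ ^ 2 + ‖y'‖ ^ 2) := Real.sqrt_pos.2 (sq_pos_aux h')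
      have h2 : 0 < ‖y‖ := norm_pos_iff.2 hy
      have h2' : 0 < ‖y'‖ := norm_pos_iff.2 hy'
      simp only [proj, hy, hy', if_false]
      rw [S.dist_ι, sqrt_aux x y hy, sqrt_aux x' y' hy', dist_eq_norm, div_sub_div _ _ hy hy',
        norm_div, norm_mul y, mul_comm y x']
      field_simp

/-- The normalisation condition. -/
def Nrm (p q : ℂ) : Prop := star p * p + star q * q = 1

lemma nrm_sq {p q : ℂ} (h : Nrm p q) (u : ℂ) :
    ‖star q * u + p‖ ^ 2 + ‖q - star p * u‖ ^ 2 = 1 + ‖u‖ ^ 2 := by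
  unfold Nrm at h
  have h2 := congrArg Complex.re h
  simp at h2
  simp only [Complex.sq_norm, Complex.normSq_apply]
  simp
  linear_combination (1 + u.re ^ 2 + u.im ^ 2) * h2

lemma nrm_ne {p q : ℂ} (h : Nrm p q) (u : ℂ) :
    star q * u + p ≠ 0 ∨ q - star p * u ≠ 0 := by
  by_contra hc
  push Not at hc
  have := nrm_sq h u
  rw [hc.1, hc.2] at this
  simp at this
  nlinarith [sq_nonneg ‖u‖]

lemma nrm_anti_sq {p q : ℂ} (h : Nrm p q) : ‖star q‖ ^ 2 + ‖-star p‖ ^ 2 = 1 := by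
  have := nrm_sq h 0
  simp at this ⊢
  linarith

lemma nrm_anti_ne {p q : ℂ} (h : Nrm p q) : star q ≠ 0 ∨ -star p ≠ 0 := by
  by_contra hc
  push Not at hc
  have := nrm_anti_sq h
  rw [hc.1, hc.2] at this
  simp at this

lemma dist_psi (S : SphereModel 𝕊) {p q : ℂ} (h : Nrm p q) (u v : ℂ) :
    dist (S.psi p q u) (S.psi p q v) = 2 * ‖u - v‖ /
      (Real.sqrt (1 + ‖u‖ ^ 2) * Real.sqrt (1 + ‖v‖ ^ 2)) := by
  unfold psi
  rw [S.dist_proj (nrm_ne h u) (nrm_ne h v), nrm_sq h, nrm_sq h]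
  congr 3
  unfold Nrm at h
  linear_combination (u - v) * h

lemma dist_psi_anti (S : SphereModel 𝕊) {p q : ℂ} (h : Nrm p q) (u : ℂ) :
    dist (S.psi p q u) (S.anti p q) = 2 / Real.sqrt (1 + ‖u‖ ^ 2) := by
  unfold psi anti
  rw [S.dist_proj (nrm_ne h u) (nrm_anti_ne h), nrm_sq h, nrm_anti_sq h]
  have : (star q * u + p) * -star p - star q * (q - star p * u) = -1 := by
    unfold Nrm at h
    linear_combination -h
  rw [this]
  simp

lemma proj_surj (S : SphereModel 𝕊) (x : 𝕊) : ∃ p q, Nrm p q ∧ S.proj p q = x := by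
  by_cases hx : x = S.infty
  · exact ⟨1, 0, by simp [Nrm], by simp [proj, hx]⟩
  · obtain ⟨a, rfl⟩ := S.exists_ι hx
    have hpos : 0 < Real.sqrt (1 + ‖a‖ ^ 2) := Real.sqrt_pos.2 (by positivity)
    set t : ℂ := ((Real.sqrt (1 + ‖a‖ ^ 2) : ℝ) : ℂ) with ht
    have ht0 : t ≠ 0 := by
      rw [ht]; exact_mod_cast hpos.ne'
    have hts : t * t = 1 + star a * a := by
      rw [ht, ← Complex.ofReal_mul, Real.mul_self_sqrt (by positivity)]
      have := Complex.conj_mul' a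
      simp only [Complex.star_def]
      rw [this]; push_cast; ring
    have hstar : star t = t := by
      rw [ht]; exact Complex.conj_ofReal _
    refine ⟨a / t, 1 / t, ?_, ?_⟩
    · unfold Nrm
      rw [star_div₀, star_div₀, hstar, star_one]
      field_simp
      linear_combination -hts
    · unfold proj
      rw [if_neg (by simpa using ht0)]
      congr 1
      field_simp

lemma exists_psi (S : SphereModel 𝕊) (x : 𝕊) : ∃ p q, Nrm p q ∧ S.psi p q 0 = x := by
  obtain ⟨p, q, h, h'⟩ := S.proj_surj x
  exact ⟨p, q, h, by simpa [psi] using h'⟩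

lemma exists_anti (S : SphereModel 𝕊) (x : 𝕊) : ∃ p q, Nrm p q ∧ S.anti p q = x := by
  obtain ⟨p, q, h, h'⟩ := S.proj_surj x
  refine ⟨-star q, star p, ?_, by simpa [anti] using h'⟩
  unfold Nrm at *
  simp only [star_neg, star_star]
  linear_combination h

lemma phi_proj (S : SphereModel 𝕊) (p q x y : ℂ) (h : x ≠ 0 ∨ y ≠ 0) :
    S.phi p q (S.proj x y) = (q * x - p * y) / (star p * x + star q * y) := by
  unfold phi proj
  by_cases hy : y = 0
  · have hx : x ≠ 0 := by tauto
    simp only [hy, if_true]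
    simp only [mul_zero, sub_zero, add_zero]
    rw [mul_div_mul_right _ _ hx]
  · simp only [hy, if_false, S.ι_ne_infty, S.toC_ι]
    rw [← mul_div_mul_right (q * (x / y) - p) _ hy]
    congr 1 <;> field_simp

lemma phi_psi (S : SphereModel 𝕊) {p q : ℂ} (h : Nrm p q) (u : ℂ) :
    S.phi p q (S.psi p q u) = u := by
  unfold psi
  rw [phi_proj _ _ _ _ _ (nrm_ne h u)]
  unfold Nrm at h
  rw [show star p * (star q * u + p) + star q * (q - star p * u) = 1 by linear_combination h,
    div_one]
  linear_combination u * h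

lemma proj_smul (S : SphereModel 𝕊) (c x y : ℂ) (hc : c ≠ 0) :
    S.proj (c * x) (c * y) = S.proj x y := by
  unfold proj
  by_cases hy : y = 0
  · simp [hy]
  · simp only [hy, mul_eq_zero, hc, or_self, if_false]
    rw [mul_div_mul_left _ _ hc]

lemma denom_ne (S : SphereModel 𝕊) {p q : ℂ} (h : Nrm p q) {x y : ℂ} (hxy : x ≠ 0 ∨ y ≠ 0)
    (hx : S.proj x y ≠ S.anti p q) : star p * x + star q * y ≠ 0 := by
  intro h0
  apply hx
  unfold Nrm at h
  have e1 : x = (q * x - p * y) * star q := by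
    linear_combination p * h0 - x * h
  have e2 : y = (q * x - p * y) * (-star p) := by
    linear_combination q * h0 - y * h
  have hc : q * x - p * y ≠ 0 := by
    intro hc
    rw [hc] at e1 e2
    simp at e1 e2
    tauto
  unfold anti
  rw [← S.proj_smul _ (star q) (-star p) hc, ← e1, ← e2]

lemma psi_phi (S : SphereModel 𝕊) {p q : ℂ} (h : Nrm p q) {x : 𝕊} (hx : x ≠ S.anti p q) :
    S.psi p q (S.phi p q x) = x := by
  obtain ⟨a, b, hab, rfl⟩ := S.proj_surj x
  have hab' : a ≠ 0 ∨ b ≠ 0 := by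
    by_contra hc
    push Not at hc
    simp [Nrm, hc.1, hc.2] at hab
  have hd := S.denom_ne h hab' hx
  rw [phi_proj _ _ _ _ _ hab']
  unfold psi
  rw [← S.proj_smul _ _ _ hd]
  unfold Nrm at h
  congr 1
  · field_simp
    linear_combination a * h
  · field_simp
    linear_combination b * h

end SphereModel

namespace SphereModel

variable {𝕊 : Type} [MetricSpace 𝕊] [CompactSpace 𝕊]

lemma one_le_sqrt_aux (u : ℂ) : 1 ≤ Real.sqrt (1 + ‖u‖ ^ 2) := by
  rw [Real.one_le_sqrt]; nlinarith [sq_nonneg ‖u‖]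

lemma dist_psi_le (S : SphereModel 𝕊) {p q : ℂ} (h : Nrm p q) (u v : ℂ) :
    dist (S.psi p q u) (S.psi p q v) ≤ 2 * ‖u - v‖ := by
  rw [S.dist_psi h]
  apply div_le_self (by positivity)
  nlinarith [one_le_sqrt_aux u, one_le_sqrt_aux v]

lemma continuous_psi (S : SphereModel 𝕊) {p q : ℂ} (h : Nrm p q) : Continuous (S.psi p q) := by
  refine (LipschitzWith.of_dist_le_mul (K := 2) fun u v => ?_).continuous
  rw [dist_eq_norm]
  exact S.dist_psi_le h u v

lemma norm_sub_le_dist (S : SphereModel 𝕊) {p q : ℂ} (h : Nrm p q) {u v : ℂ} {m : ℝ}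
    (hu : ‖u‖ ≤ m) (hv : ‖v‖ ≤ m) :
    ‖u - v‖ ≤ (1 + m ^ 2) / 2 * dist (S.psi p q u) (S.psi p q v) := by
  rw [S.dist_psi h]
  have e1 := one_le_sqrt_aux u
  have e2 := one_le_sqrt_aux v
  set a := Real.sqrt (1 + ‖u‖ ^ 2) with ha
  set b := Real.sqrt (1 + ‖v‖ ^ 2) with hb
  have h1 : a ^ 2 ≤ 1 + m ^ 2 := by
    rw [ha, Real.sq_sqrt (by positivity)]
    nlinarith [norm_nonneg u]
  have h2 : b ^ 2 ≤ 1 + m ^ 2 := by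
    rw [hb, Real.sq_sqrt (by positivity)]
    nlinarith [norm_nonneg v]
  have h3 : a * b ≤ 1 + m ^ 2 := by nlinarith [sq_nonneg (a - b)]
  have : (1 + m ^ 2) / 2 * (2 * ‖u - v‖ / (a * b)) = (1 + m ^ 2) * ‖u - v‖ / (a * b) := by ring
  rw [this, le_div_iff₀ (by positivity)]
  nlinarith [norm_nonneg (u - v)]

lemma norm_le_of_dist_anti (S : SphereModel 𝕊) {p q : ℂ} (h : Nrm p q) {u : ℂ} {δ : ℝ}
    (hδ : 0 < δ) (hu : δ ≤ dist (S.psi p q u) (S.anti p q)) : ‖u‖ ≤ 2 / δ := by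
  rw [S.dist_psi_anti h] at hu
  have e1 := one_le_sqrt_aux u
  rw [le_div_iff₀ (by positivity)] at hu
  have : ‖u‖ ≤ Real.sqrt (1 + ‖u‖ ^ 2) := Real.le_sqrt_of_sq_le (by linarith)
  rw [le_div_iff₀ hδ]
  nlinarith

lemma dist_psi_zero_anti (S : SphereModel 𝕊) {p q : ℂ} (h : Nrm p q) :
    dist (S.psi p q 0) (S.anti p q) = 2 := by
  rw [S.dist_psi_anti h]; simp

lemma norm_phi_le (S : SphereModel 𝕊) {p q : ℂ} (h : Nrm p q) {x : 𝕊}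
    (hx : dist x (S.psi p q 0) < 1) : x ≠ S.anti p q ∧ ‖S.phi p q x‖ ≤ dist x (S.psi p q 0) := by
  have hne : x ≠ S.anti p q := by
    rintro rfl
    rw [dist_comm, S.dist_psi_zero_anti h] at hx
    norm_num at hx
  refine ⟨hne, ?_⟩
  have hp := S.psi_phi h hne
  set u := S.phi p q x
  rw [← hp] at hx ⊢
  have hd : 1 ≤ dist (S.psi p q u) (S.anti p q) := by
    have := dist_triangle (S.psi p q 0) (S.psi p q u) (S.anti p q)
    rw [S.dist_psi_zero_anti h, dist_comm (S.psi p q 0)] at this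
    linarith
  rw [S.dist_psi_anti h, le_div_iff₀ (by linarith [one_le_sqrt_aux u])] at hd
  rw [S.dist_psi h]
  simp
  rw [le_div_iff₀ (by linarith [one_le_sqrt_aux u])]
  nlinarith [norm_nonneg u]

lemma isPreconnected_ball (S : SphereModel 𝕊) (z : 𝕊) (R : ℝ) :
    IsPreconnected (Metric.ball z R) := by
  obtain ⟨p, q, h, rfl⟩ := S.exists_psi z
  rcases le_or_gt R 2 with hR | hR
  · have : Metric.ball (S.psi p q 0) R =
        S.psi p q '' {u | dist (S.psi p q u) (S.psi p q 0) < R} := by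
      ext x
      constructor
      · intro hx
        have hne : x ≠ S.anti p q := by
          rintro rfl
          rw [mem_ball, dist_comm, S.dist_psi_zero_anti h] at hx
          linarith
        refine ⟨S.phi p q x, ?_, S.psi_phi h hne⟩
        simpa [S.psi_phi h hne] using hx
      · rintro ⟨u, hu, rfl⟩
        exact hu
    rw [this]
    apply IsPreconnected.image _ _ (S.continuous_psi h).continuousOn
    rcases Set.eq_empty_or_nonempty {u | dist (S.psi p q u) (S.psi p q 0) < R} with he | hne
    · rw [he]; exact isPreconnected_empty
    · have hst : StarConvex ℝ 0 {u | dist (S.psi p q u) (S.psi p q 0) < R} := by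
        rw [starConvex_zero_iff]
        intro u hu t ht0 ht1
        simp only [mem_ofPred_eq] at hu ⊢
        refine lt_of_le_of_lt ?_ hu
        rw [S.dist_psi h, S.dist_psi h]
        have e1 := one_le_sqrt_aux u
        have e2 := one_le_sqrt_aux (t • u)
        simp only [sub_zero, norm_zero]
        norm_num
        rw [abs_of_nonneg ht0] 
        rw [norm_smul, Real.norm_eq_abs, abs_of_nonneg ht0] at e2
        rw [div_le_div_iff₀ (by linarith) (by linarith)]
        have : t * Real.sqrt (1 + ‖u‖ ^ 2) ≤ Real.sqrt (1 + (t * ‖u‖) ^ 2) := by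
          apply Real.le_sqrt_of_sq_le
          rw [mul_pow, Real.sq_sqrt (by positivity)]
          nlinarith
        nlinarith [norm_nonneg u]
      exact (hst.isPathConnected (by
        obtain ⟨u, hu⟩ := hne
        have hR0 : 0 < R := lt_of_le_of_lt dist_nonneg hu
        simpa using hR0)).isConnected.isPreconnected
  · have h1 : IsPreconnected (range (S.psi p q)) := isPreconnected_range (S.continuous_psi h)
    refine h1.subset_closure ?_ ?_
    · rintro _ ⟨u, rfl⟩
      rw [mem_ball, S.dist_psi h]
      have : ‖u‖ ≤ Real.sqrt (1 + ‖u‖ ^ 2) := Real.le_sqrt_of_sq_le (by linarith)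
      have e1 := one_le_sqrt_aux u
      simp
      rw [div_lt_iff₀ (by linarith)]
      nlinarith
    · intro x _
      by_cases hx : x = S.anti p q
      · rw [hx, Metric.mem_closure_range_iff]
        intro ε hε
        refine ⟨((2 / ε : ℝ) : ℂ), ?_⟩
        rw [dist_comm, S.dist_psi_anti h, Complex.norm_real, Real.norm_of_nonneg (by positivity)]
        have : 2 / ε < Real.sqrt (1 + (2 / ε) ^ 2) := Real.lt_sqrt_of_sq_lt (by linarith)
        have e0 : 0 < 2 / ε := by positivity
        rw [div_lt_iff₀ (by linarith)]
        rw [div_lt_iff₀ hε] at this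
        linarith
      · exact subset_closure ⟨_, S.psi_phi h hx⟩

lemma chartInv_chart (S : SphereModel 𝕊) (x : 𝕊) :
    ∀ᶠ y in 𝓝 x, S.chartInv x (S.chart x y) = y := by
  by_cases hx : x = S.infty
  · subst hx
    have h0 : ∀ᶠ y in 𝓝 S.infty, y ≠ S.ι 0 :=
      isOpen_ne.mem_nhds (S.ι_ne_infty 0).symm
    filter_upwards [h0] with y hy
    simp only [chartInv, chart, if_true, Function.comp]
    rw [S.ι_toC, S.sphereInv_invol]
    intro h
    apply hy
    rw [← S.sphereInv_invol y, h, S.sphereInv_infty]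
  · have h0 : ∀ᶠ y in 𝓝 x, y ≠ S.infty := isOpen_ne.mem_nhds hx
    filter_upwards [h0] with y hy
    simp only [chartInv, chart, if_neg hx]
    exact S.ι_toC hy

lemma chart_chartInv (S : SphereModel 𝕊) (x : 𝕊) (a : ℂ) : S.chart x (S.chartInv x a) = a := by
  by_cases hx : x = S.infty
  · simp only [chartInv, chart, if_pos hx, Function.comp, S.sphereInv_invol, S.toC_ι]
  · simp only [chartInv, chart, if_neg hx, S.toC_ι]

lemma continuous_chartInv (S : SphereModel 𝕊) (x : 𝕊) : Continuous (S.chartInv x) := by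
  unfold chartInv
  split_ifs
  · exact S.continuous_sphereInv.comp S.continuous_ι
  · exact S.continuous_ι

lemma isOpenMap_chartInv (S : SphereModel 𝕊) (x : 𝕊) : IsOpenMap (S.chartInv x) := by
  unfold chartInv
  split_ifs
  · have : IsOpenMap S.sphereInv :=
      (Homeomorph.mk (Equiv.mk S.sphereInv S.sphereInv S.sphereInv_invol S.sphereInv_invol)
        S.continuous_sphereInv S.continuous_sphereInv).isOpenMap
    exact this.comp S.isOpenMap_ι
  · exact S.isOpenMap_ι

/-- Injective holomorphic maps are open. -/
lemma HolAt.nhds_le_map {S : SphereModel 𝕊} {g : 𝕊 → 𝕊} {w : 𝕊} (hg : S.HolAt g w)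
    {B : Set 𝕊} (hB : B ∈ 𝓝 w) (hinj : InjOn g B) : 𝓝 (g w) ≤ map g (𝓝 w) := by
  obtain ⟨hc, ha⟩ := hg
  set a := S.chart w w with hadef
  have haw : S.chartInv w a = w := (S.chartInv_chart w).self_of_nhds
  have hgw : S.chartInv (g w) (S.chart (g w) (g w)) = g w :=
    (S.chartInv_chart (g w)).self_of_nhds
  have htend : Tendsto (S.chartInv w) (𝓝 a) (𝓝 w) := by
    have := (S.continuous_chartInv w).tendsto a
    rwa [haw] at this
  have hcg : Tendsto (g ∘ S.chartInv w) (𝓝 a) (𝓝 (g w)) := hc.tendsto.comp htend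
  have hev : ∀ᶠ u in 𝓝 a, S.chartInv (g w) ((S.chart (g w) ∘ g ∘ S.chartInv w) u)
      = g (S.chartInv w u) := hcg.eventually (S.chartInv_chart (g w))
  rcases ha.eventually_constant_or_nhds_le_map_nhds with hconst | hopen
  · exfalso
    have h3 : ∀ᶠ u in 𝓝 a, S.chartInv w u ∈ B := htend.eventually hB
    have h4 : ∀ᶠ u in 𝓝 a, u = a := by
      filter_upwards [hconst, hev, h3] with u h1 h2 h3
      rw [h1] at h2
      have h5 := hev.self_of_nhds
      rw [h5] at h2
      have := hinj (by rw [haw]; exact mem_of_mem_nhds hB) h3 h2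
      rw [← S.chart_chartInv w u, ← this, S.chart_chartInv]
    have h6 : ∀ᶠ u in 𝓝[≠] a, u = a := h4.filter_mono nhdsWithin_le_nhds
    have h7 : ∀ᶠ u in 𝓝[≠] a, u ≠ a := eventually_mem_nhdsWithin
    obtain ⟨u, hu, hu'⟩ := (h6.and h7).exists
    exact hu' hu
  · have h1 : 𝓝 (g w) ≤ map (S.chartInv (g w)) (𝓝 (S.chart (g w) (g w))) := by
      have := (S.isOpenMap_chartInv (g w)).nhds_le (S.chart (g w) (g w))
      rwa [hgw] at this
    have h2 : (S.chart (g w) ∘ g ∘ S.chartInv w) a = S.chart (g w) (g w) := by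
      simp only [Function.comp, haw]
    rw [h2] at hopen
    calc 𝓝 (g w) ≤ map (S.chartInv (g w)) (𝓝 (S.chart (g w) (g w))) := h1
      _ ≤ map (S.chartInv (g w)) (map (S.chart (g w) ∘ g ∘ S.chartInv w) (𝓝 a)) :=
        map_mono hopen
      _ = map (g ∘ S.chartInv w) (𝓝 a) := by
        rw [map_map]
        exact map_congr hev
      _ = map g (map (S.chartInv w) (𝓝 a)) := by rw [map_map]
      _ ≤ map g (𝓝 w) := map_mono htend

lemma HolAt.differentiableAt {S : SphereModel 𝕊} {g : 𝕊 → 𝕊} {p q p' q' : ℂ}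
    (h : Nrm p q) (h' : Nrm p' q') {u : ℂ} (hg : S.HolAt g (S.psi p q u))
    (hne : g (S.psi p q u) ≠ S.anti p' q') :
    DifferentiableAt ℂ (fun v => S.phi p' q' (g (S.psi p q v))) u := by
  obtain ⟨hc, ha⟩ := hg
  set w := S.psi p q u with hw
  have hψ : Tendsto (S.psi p q) (𝓝 u) (𝓝 w) := (S.continuous_psi h).tendsto u
  have hgw : S.chartInv (g w) (S.chart (g w) (g w)) = g w :=
    (S.chartInv_chart (g w)).self_of_nhds
  have e1 : ∀ᶠ v in 𝓝 u, S.chartInv w (S.chart w (S.psi p q v)) = S.psi p q v :=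
    hψ.eventually (S.chartInv_chart w)
  have e2 : ∀ᶠ v in 𝓝 u, S.chartInv (g w) (S.chart (g w) (g (S.psi p q v)))
      = g (S.psi p q v) := (hc.tendsto.comp hψ).eventually (S.chartInv_chart (g w))
  -- first transition
  have d1 : DifferentiableAt ℂ (fun v => S.chart w (S.psi p q v)) u := by
    by_cases hwi : w = S.infty
    · have hq : q - star p * u = 0 := by
        by_contra hq
        apply S.ι_ne_infty ((star q * u + p) / (q - star p * u))
        rw [← hwi, hw, psi, proj, if_neg hq]
      have hp : star q * u + p ≠ 0 := (nrm_ne h u).resolve_right (by simpa using hq)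
      have hev : ∀ᶠ v in 𝓝 u, star q * v + p ≠ 0 := by
        have : Continuous fun v : ℂ => star q * v + p := by fun_prop
        exact this.continuousAt.eventually_ne hp
      have : (fun v => S.chart w (S.psi p q v)) =ᶠ[𝓝 u]
          fun v => (q - star p * v) / (star q * v + p) := by
        filter_upwards [hev] with v hv
        have hp1 : S.psi p q v = S.sphereInv (S.ι ((q - star p * v) / (star q * v + p))) := by
          rw [sphereInv_ι_eq, ← S.proj_smul _ _ _ hv, psi, mul_one, mul_div_cancel₀ _ hv]
        simp only [chart, if_pos hwi, Function.comp]
        rw [hp1, S.sphereInv_invol, S.toC_ι]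
      refine DifferentiableAt.congr_of_eventuallyEq ?_ this
      exact DifferentiableAt.fun_div (by fun_prop) (by fun_prop) hp
    · have hq : q - star p * u ≠ 0 := by
        intro hq
        apply hwi
        rw [hw, psi, proj, if_pos hq]
      have hev : ∀ᶠ v in 𝓝 u, q - star p * v ≠ 0 := by
        have : Continuous fun v : ℂ => q - star p * v := by fun_prop
        exact this.continuousAt.eventually_ne hq
      have : (fun v => S.chart w (S.psi p q v)) =ᶠ[𝓝 u]
          fun v => (star q * v + p) / (q - star p * v) := by
        filter_upwards [hev] with v hv
        simp only [chart, if_neg hwi]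
        rw [psi, proj, if_neg hv, S.toC_ι]
      refine DifferentiableAt.congr_of_eventuallyEq ?_ this
      exact DifferentiableAt.fun_div (by fun_prop) (by fun_prop) hq
  have d2 : DifferentiableAt ℂ (fun v => S.phi p' q' (S.chartInv (g w) v))
      (S.chart (g w) (g w)) := by
    by_cases hwi : g w = S.infty
    · have : (fun v => S.phi p' q' (S.chartInv (g w) v)) =
          fun v => (q' * 1 - p' * v) / (star p' * 1 + star q' * v) := by
        funext v
        simp only [chartInv, if_pos hwi, Function.comp]
        rw [S.sphereInv_ι_eq, S.phi_proj _ _ _ _ (Or.inl one_ne_zero)]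
      rw [this]
      refine DifferentiableAt.div (by fun_prop) (by fun_prop) ?_
      apply S.denom_ne h' (Or.inl one_ne_zero)
      rw [← sphereInv_ι_eq]
      have h9 := hgw
      rw [chartInv, if_pos hwi] at h9
      simp only [Function.comp] at h9
      rw [h9]
      exact hne
    · have hι : ∀ v, S.ι v = S.proj v 1 := by intro v; simp [proj]
      have : (fun v => S.phi p' q' (S.chartInv (g w) v)) =
          fun v => (q' * v - p' * 1) / (star p' * v + star q' * 1) := by
        funext v
        simp only [chartInv, if_neg hwi]
        rw [hι, S.phi_proj _ _ _ _ (Or.inr one_ne_zero)]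
      rw [this]
      refine DifferentiableAt.div (by fun_prop) (by fun_prop) ?_
      apply S.denom_ne h' (Or.inr one_ne_zero)
      rw [← hι]
      have h9 := hgw
      rw [chartInv, if_neg hwi] at h9
      rw [h9]
      exact hne
  have hww : S.chartInv w (S.chart w w) = w := (S.chartInv_chart w).self_of_nhds
  have d3 := ha.differentiableAt.comp u (f := fun v => S.chart w (S.psi p q v)) d1
  have d4 := DifferentiableAt.comp u (f := (S.chart (g w) ∘ g ∘ S.chartInv w) ∘
      fun v => S.chart w (S.psi p q v)) (g := fun v => S.phi p' q' (S.chartInv (g w) v))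
      (by simpa only [Function.comp, ← hw, hww] using d2) d3
  refine d4.congr_of_eventuallyEq ?_
  filter_upwards [e1, e2] with v h1 h2
  simp only [Function.comp]
  rw [h1, h2]

end SphereModel

namespace SphereModel

variable {𝕊 : Type} [MetricSpace 𝕊] [CompactSpace 𝕊]

lemma exists_disc {s m t : ℝ} (hs : 0 < s) (hm : 0 < m) (ht : 0 < t) :
    ∃ ε > 0, ∀ (G : ℂ → ℂ) (c : ℂ), DifferentiableOn ℂ G (ball c s) →
      (∀ u ∈ ball c s, ‖G u‖ ≤ m) → t ≤ ‖deriv G c‖ → ball (G c) ε ⊆ G '' ball c s := by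
  set σ := min (s / 2) (t * s ^ 2 / (8 * m)) with hσ
  have hσ0 : 0 < σ := lt_min (by positivity) (by positivity)
  have hσs : σ < s := lt_of_le_of_lt (min_le_left _ _) (by linarith)
  have hσt : σ ≤ t * s ^ 2 / (8 * m) := min_le_right _ _
  refine ⟨σ * (t / 2) / 2, by positivity, fun G c hG hb hd => ?_⟩
  have hcs : c ∈ ball c s := mem_ball_self hs
  have hmap : MapsTo G (ball c s) (closedBall (G c) (2 * m)) := fun u hu => by
    rw [mem_closedBall, dist_eq_norm]
    calc ‖G u - G c‖ ≤ ‖G u‖ + ‖G c‖ := norm_sub_le _ _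
      _ ≤ 2 * m := by linarith [hb u hu, hb c hcs]
  have hD : DifferentiableOn ℂ (dslope G c) (ball c s) :=
    (Complex.differentiableOn_dslope (isOpen_ball.mem_nhds hcs)).2 hG
  have hDb : ∀ u ∈ ball c s, ‖dslope G c u‖ ≤ 2 * m / s := fun u hu =>
    Complex.norm_dslope_le_div_of_mapsTo_ball hG hmap hu
  have hDmap : MapsTo (dslope G c) (ball c s) (closedBall (dslope G c c) (2 * (2 * m / s))) :=
    fun u hu => by
      rw [mem_closedBall, dist_eq_norm]
      calc ‖dslope G c u - dslope G c c‖ ≤ ‖dslope G c u‖ + ‖dslope G c c‖ := norm_sub_le _ _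
        _ ≤ 2 * (2 * m / s) := by linarith [hDb u hu, hDb c hcs]
  have hlow : ∀ v ∈ sphere c σ, σ * (t / 2) ≤ ‖G v - G c‖ := by
    intro v hv
    rw [mem_sphere] at hv
    have hvs : v ∈ ball c s := by rw [mem_ball, hv]; exact hσs
    have h1 := Complex.dist_le_div_mul_dist_of_mapsTo_ball hD hDmap hvs
    rw [hv, dslope_same, dist_eq_norm] at h1
    have h2 : 2 * (2 * m / s) / s * σ ≤ t / 2 := by
      calc 2 * (2 * m / s) / s * σ ≤ 2 * (2 * m / s) / s * (t * s ^ 2 / (8 * m)) := by gcongr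
        _ = t / 2 := by field_simp; norm_num
    have h3 : ‖deriv G c‖ ≤ ‖dslope G c v‖ + ‖dslope G c v - deriv G c‖ := by
      have := norm_sub_le (dslope G c v) (dslope G c v - deriv G c)
      simpa using this
    have h4 : t / 2 ≤ ‖dslope G c v‖ := by linarith
    have h5 : ‖G v - G c‖ = σ * ‖dslope G c v‖ := by
      rw [← sub_smul_dslope G c v, norm_smul, ← dist_eq_norm, hv]
    rw [h5]
    gcongr
  have hfreq : ∃ᶠ v in 𝓝 c, G v ≠ G c := by
    intro hev
    have : G =ᶠ[𝓝 c] fun _ => G c := by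
      filter_upwards [hev] with v hv
      simpa using hv
    rw [this.deriv_eq] at hd
    simp at hd
    linarith
  have hsub : closedBall c σ ⊆ ball c s := closedBall_subset_ball hσs
  exact (DiffContOnCl.ball_subset_image_closedBall (hG.diffContOnCl_ball hsub) hσ0 hlow hfreq).trans
    (image_mono hsub)

lemma ednorm_le (S : SphereModel 𝕊) {p q p' q' : ℂ} (h : Nrm p q) (h' : Nrm p' q')
    {g : 𝕊 → 𝕊} (hg : S.HolAt g (S.psi p q 0)) (hne : g (S.psi p q 0) ≠ S.anti p' q') {c : ℝ}
    (hc : ‖deriv (fun v => S.phi p' q' (g (S.psi p q v))) 0‖ < c) :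
    ednorm g (S.psi p q 0) ≤ ENNReal.ofReal (2 * c) := by
  have hc0 : 0 < c := lt_of_le_of_lt (norm_nonneg _) hc
  have hd := (hg.differentiableAt h h' hne).hasDerivAt
  set G := fun v => S.phi p' q' (g (S.psi p q v)) with hG
  have e1 : ∀ᶠ v in 𝓝 (0 : ℂ), ‖G v - G 0‖ ≤ c * ‖v‖ := by
    have := (hasDerivAt_iff_isLittleO.1 hd).def (sub_pos.2 hc)
    filter_upwards [this] with v hv
    simp only [sub_zero, smul_eq_mul] at hv
    calc ‖G v - G 0‖ = ‖(G v - G 0 - v * deriv G 0) + v * deriv G 0‖ := by congr 1; ring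
      _ ≤ ‖G v - G 0 - v * deriv G 0‖ + ‖v * deriv G 0‖ := norm_add_le _ _
      _ ≤ (c - ‖deriv G 0‖) * ‖v‖ + ‖v‖ * ‖deriv G 0‖ := by
        rw [norm_mul]; gcongr
      _ = c * ‖v‖ := by ring
  have e2 : ∀ᶠ x in 𝓝 (S.psi p q 0), dist x (S.psi p q 0) < 1 := ball_mem_nhds _ one_pos
  have hφ : Tendsto (S.phi p q) (𝓝 (S.psi p q 0)) (𝓝 0) := by
    rw [tendsto_zero_iff_norm_tendsto_zero]
    refine squeeze_zero' (g := fun x => dist x (S.psi p q 0)) (Eventually.of_forall fun _ => norm_nonneg _) ?_ ?_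
    · filter_upwards [e2] with x hx using (S.norm_phi_le h hx).2
    · exact tendsto_iff_dist_tendsto_zero.1 tendsto_id
  have e3 : ∀ᶠ x in 𝓝 (S.psi p q 0), g x ≠ S.anti p' q' := hg.1.eventually_ne hne
  unfold ednorm
  refine limsup_le_of_le (h := ?_)
  refine Eventually.filter_mono nhdsWithin_le_nhds ?_
  filter_upwards [e2, e3, hφ.eventually e1] with x h2 h3 h1
  apply ENNReal.div_le_of_le_mul
  rw [edist_dist, edist_dist, ← ENNReal.ofReal_mul (by positivity)]
  apply ENNReal.ofReal_le_ofReal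
  obtain ⟨hx, hx'⟩ := S.norm_phi_le h h2
  have hGx : G (S.phi p q x) = S.phi p' q' (g x) := by simp only [hG, S.psi_phi h hx]
  calc dist (g x) (g (S.psi p q 0))
      = dist (S.psi p' q' (G (S.phi p q x))) (S.psi p' q' (G 0)) := by
        rw [hGx, S.psi_phi h' h3, S.psi_phi h' hne]
    _ ≤ 2 * ‖G (S.phi p q x) - G 0‖ := S.dist_psi_le h' _ _
    _ ≤ 2 * (c * ‖S.phi p q x‖) := by gcongr
    _ ≤ 2 * (c * dist x (S.psi p q 0)) := by gcongr
    _ = _ := by ring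

lemma local_est (S : SphereModel 𝕊) {ρ δ τ : ℝ} (hρ : 0 < ρ) (hδ : 0 < δ) (hτ : 0 < τ) :
    ∃ K > 0, ∃ ε > 0, ∀ (w x₀ : 𝕊) (g : 𝕊 → 𝕊), (∀ x ∈ ball w ρ, S.HolAt g x) →
      (∀ x ∈ ball w ρ, δ ≤ dist (g x) x₀) →
      ednorm g w ≤ ENNReal.ofReal K ∧
      (ENNReal.ofReal τ ≤ ednorm g w → ball (g w) ε ⊆ g '' ball w ρ) := by
  have hs : 0 < ρ / 2 := by positivity
  have hm : 0 < 2 / δ := by positivity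
  obtain ⟨ε₀, hε₀, hdisc⟩ := exists_disc hs hm (t := τ / 4) (by positivity)
  set C := (1 + (2 / (δ / 2)) ^ 2) / 2 with hC
  have hC0 : 0 < C := by positivity
  refine ⟨2 * (2 * (2 / δ) / (ρ / 2) + 1), by positivity, min (δ / 2) (ε₀ / C),
    lt_min (by positivity) (by positivity), ?_⟩
  intro w x₀ g hg hav
  obtain ⟨p, q, h, rfl⟩ := S.exists_psi w
  obtain ⟨p', q', h', rfl⟩ := S.exists_anti x₀
  have hin : ∀ v ∈ ball (0 : ℂ) (ρ / 2), S.psi p q v ∈ ball (S.psi p q 0) ρ := by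
    intro v hv
    rw [mem_ball] at hv ⊢
    refine lt_of_le_of_lt (S.dist_psi_le h v 0) ?_
    rw [dist_eq_norm] at hv
    linarith
  have hne : ∀ x ∈ ball (S.psi p q 0) ρ, g x ≠ S.anti p' q' := by
    intro x hx heq
    have := hav x hx
    rw [heq, dist_self] at this
    linarith
  have hw := mem_ball_self hρ (x := S.psi p q 0)
  set G := fun v => S.phi p' q' (g (S.psi p q v)) with hG
  have hGd : DifferentiableOn ℂ G (ball 0 (ρ / 2)) := fun v hv =>
    ((hg _ (hin v hv)).differentiableAt h h' (hne _ (hin v hv))).differentiableWithinAt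
  have hψG : ∀ v ∈ ball (0 : ℂ) (ρ / 2), S.psi p' q' (G v) = g (S.psi p q v) := fun v hv =>
    S.psi_phi h' (hne _ (hin v hv))
  have hGb : ∀ v ∈ ball (0 : ℂ) (ρ / 2), ‖G v‖ ≤ 2 / δ := by
    intro v hv
    apply S.norm_le_of_dist_anti h' hδ
    rw [hψG v hv]
    exact hav _ (hin v hv)
  have h00 : (0 : ℂ) ∈ ball (0 : ℂ) (ρ / 2) := mem_ball_self hs
  constructor
  · apply S.ednorm_le h h' (hg _ hw) (hne _ hw)
    have : ‖deriv G 0‖ ≤ 2 * (2 / δ) / (ρ / 2) := by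
      apply Complex.norm_deriv_le_div_of_mapsTo_ball hGd _ hs
      intro u hu
      rw [mem_closedBall, dist_eq_norm]
      calc ‖G u - G 0‖ ≤ ‖G u‖ + ‖G 0‖ := norm_sub_le _ _
        _ ≤ _ := by linarith [hGb u hu, hGb 0 h00]
    exact lt_of_le_of_lt this (lt_add_one _)
  · intro hτ'
    have ht : τ / 4 ≤ ‖deriv G 0‖ := by
      by_contra hlt
      push Not at hlt
      have h1 := S.ednorm_le h h' (hg _ hw) (hne _ hw) hlt
      have h2 := hτ'.trans h1
      rw [ENNReal.ofReal_le_ofReal_iff (by positivity)] at h2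
      linarith
    have hd := hdisc G 0 hGd hGb ht
    intro x hx
    rw [mem_ball] at hx
    have hx1 := lt_of_lt_of_le hx (min_le_left _ _)
    have hx2 := lt_of_lt_of_le hx (min_le_right _ _)
    have hxd : δ / 2 ≤ dist x (S.anti p' q') := by
      have := dist_triangle (g (S.psi p q 0)) x (S.anti p' q')
      have h3 := hav _ hw
      rw [dist_comm _ x] at this
      linarith
    have hxne : x ≠ S.anti p' q' := by
      rintro rfl
      rw [dist_self] at hxd
      linarith
    have hxψ := S.psi_phi h' hxne
    have hb1 : ‖S.phi p' q' x‖ ≤ 2 / (δ / 2) := by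
      apply S.norm_le_of_dist_anti h' (by positivity)
      rwa [hxψ]
    have hb2 : ‖G 0‖ ≤ 2 / (δ / 2) := by
      refine (hGb 0 h00).trans ?_
      gcongr
      linarith
    have hb3 := S.norm_sub_le_dist h' hb1 hb2
    rw [hxψ, hψG 0 h00] at hb3
    have hmem : S.phi p' q' x ∈ ball (G 0) ε₀ := by
      rw [mem_ball, dist_eq_norm]
      refine lt_of_le_of_lt hb3 ?_
      rw [lt_div_iff₀ hC0, mul_comm] at hx2
      exact hx2
    obtain ⟨v, hv, hvx⟩ := hd hmem
    refine ⟨S.psi p q v, hin v hv, ?_⟩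
    rw [← hψG v hv, hvx, hxψ]

lemma eqOn_of_meet (S : SphereModel 𝕊) {z : 𝕊} {R : ℝ} {g g' : 𝕊 → 𝕊}
    (hg : ∀ w ∈ ball z R, S.HolAt g w) (hg' : ∀ w ∈ ball z R, S.HolAt g' w)
    (hinj : InjOn g (ball z R))
    (hd : ∀ w ∈ ball z R, ∀ w' ∈ ball z R, g w = g' w' → w = w')
    {w w' : 𝕊} (hw : w ∈ ball z R) (hw' : w' ∈ ball z R) (h : g w = g' w') :
    EqOn g g' (ball z R) := by
  have hww := hd w hw w' hw' h
  subst hww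
  have hsub : ball z R ⊆ {x | x ∈ ball z R ∧ g x = g' x} := by
    refine (S.isPreconnected_ball z R).subset_of_closure_inter_subset ?_ ⟨w, hw, hw, h⟩ ?_
    · rw [isOpen_iff_mem_nhds]
      rintro x ⟨hx, hxe⟩
      have hB : ball z R ∈ 𝓝 x := isOpen_ball.mem_nhds hx
      have h1 := (hg x hx).nhds_le_map hB hinj
      have h2 : g '' ball z R ∈ 𝓝 (g x) := h1 (image_mem_map hB)
      rw [hxe] at h2
      filter_upwards [hB, (hg' x hx).1 h2] with y hy hy'
      obtain ⟨y', hy1, hy2⟩ := hy'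
      have := hd y' hy1 y hy hy2
      exact ⟨hy, by rw [← hy2, this]⟩
    · rintro x ⟨hx, hxB⟩
      refine ⟨hxB, ?_⟩
      rw [mem_closure_iff_frequently] at hx
      by_contra hne
      have : ∀ᶠ y in 𝓝 x, g y ≠ g' y :=
        ((hg x hxB).1.prodMk (hg' x hxB).1).eventually
          (isClosed_diagonal.isOpen_compl.mem_nhds (show (g x, g' x) ∈ (diagonal 𝕊)ᶜ from hne))
      exact hx (this.mono fun y hy hy' => hy hy'.2)
  exact fun x hx => (hsub hx).2

lemma family_bound (S : SphereModel 𝕊) {z : 𝕊} {R r τ : ℝ} (hr : 0 < r) (hrR : r < R)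
    (hτ : 0 < τ) (F : Set (𝕊 → 𝕊)) (hF : ∀ g ∈ F, ∀ w ∈ ball z R, S.HolAt g w)
    (hd : ∀ g ∈ F, ∀ g' ∈ F, ∀ w ∈ ball z R, ∀ w' ∈ ball z R, g w = g' w' → w = w') :
    ∃ M > 0, (∀ g ∈ F, ∀ w ∈ ball z r, ednorm g w ≤ ENNReal.ofReal M) ∧
      Set.Finite {g₀ : ball z r → 𝕊 | ∃ g ∈ F, (∀ w : ball z r, g₀ w = g w) ∧
        ∃ w ∈ ball z r, ENNReal.ofReal τ ≤ ednorm g w} := by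
  rcases F.eq_empty_or_nonempty with rfl | ⟨g₁, hg₁⟩
  · exact ⟨1, one_pos, by simp, by simp⟩
  have hz : z ∈ ball z R := mem_ball_self (hr.trans hrR)
  have hrsub : ball z r ⊆ ball z R := ball_subset_ball hrR.le
  have hinj : ∀ g ∈ F, InjOn g (ball z R) := fun g hg w hw w' hw' h =>
    hd g hg g hg w hw w' hw' h
  have hmeet : ∀ g ∈ F, ∀ g' ∈ F, ∀ w ∈ ball z R, ∀ w' ∈ ball z R, g w = g' w' →
      EqOn g g' (ball z R) := fun g hg g' hg' w hw w' hw' h =>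
    S.eqOn_of_meet (hF g hg) (hF g' hg') (hinj g hg) (hd g hg g' hg') hw hw' h
  -- bound for `g₁`
  obtain ⟨K₁, hK₁, hb₁⟩ : ∃ K > 0, ∀ w ∈ ball z r, ednorm g₁ w ≤ ENNReal.ofReal K := by
    have hcpt : IsCompact (closedBall z ((r + R) / 2)) := isClosed_closedBall.isCompact
    have hcs : closedBall z ((r + R) / 2) ⊆ ball z R := closedBall_subset_ball (by linarith)
    have huc := hcpt.uniformContinuousOn_of_continuous
      (fun x hx => (hF g₁ hg₁ x (hcs hx)).1.continuousWithinAt)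
    rw [Metric.uniformContinuousOn_iff] at huc
    obtain ⟨η, hη, huc⟩ := huc 1 one_pos
    have hρ : 0 < min η ((R - r) / 2) := lt_min hη (by linarith)
    obtain ⟨K, hK, ε, hε, hloc⟩ := S.local_est hρ one_pos hτ
    refine ⟨K, hK, fun w hw => ?_⟩
    have hwb : ∀ x ∈ ball w (min η ((R - r) / 2)), x ∈ closedBall z ((r + R) / 2) := by
      intro x hx
      rw [mem_ball] at hx hw
      have := lt_of_lt_of_le hx (min_le_right _ _)
      rw [mem_closedBall]
      linarith [dist_triangle x w z]
    obtain ⟨p, q, h, hp⟩ := S.exists_psi (g₁ w)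
    refine (hloc w (S.anti p q) g₁ (fun x hx => hF g₁ hg₁ x (hcs (hwb x hx))) ?_).1
    intro x hx
    have h1 := huc x (hwb x hx) w (hwb w (mem_ball_self hρ))
      (lt_of_lt_of_le hx (min_le_left _ _))
    have h2 := S.dist_psi_zero_anti h
    rw [hp] at h2
    have h3 := dist_triangle (g₁ w) (g₁ x) (S.anti p q)
    rw [dist_comm (g₁ w) (g₁ x)] at h3
    linarith
  -- the others
  have h1 := (hF g₁ hg₁ z hz).nhds_le_map (isOpen_ball.mem_nhds hz) (hinj g₁ hg₁)
  have h2 : g₁ '' ball z R ∈ 𝓝 (g₁ z) := h1 (image_mem_map (isOpen_ball.mem_nhds hz))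
  obtain ⟨δ, hδ, hδs⟩ := Metric.mem_nhds_iff.1 h2
  obtain ⟨K, hK, ε, hε, hloc⟩ := S.local_est (sub_pos.2 hrR) hδ hτ
  have hwb : ∀ w ∈ ball z r, ball w (R - r) ⊆ ball z R := by
    intro w hw
    apply ball_subset_ball'
    rw [mem_ball] at hw
    linarith
  have hoth : ∀ g ∈ F, ¬ EqOn g₁ g (ball z R) → ∀ w ∈ ball z r,
      ednorm g w ≤ ENNReal.ofReal K ∧
      (ENNReal.ofReal τ ≤ ednorm g w → ball (g w) ε ⊆ g '' ball z R) := by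
    intro g hg hne w hw
    have := hloc w (g₁ z) g (fun x hx => hF g hg x (hwb w hw hx)) (by
      intro x hx
      by_contra hlt
      push Not at hlt
      obtain ⟨y, hy, hyx⟩ := hδs (show g x ∈ ball (g₁ z) δ from hlt)
      exact hne (hmeet g₁ hg₁ g hg y hy x (hwb w hw hx) hyx))
    exact ⟨this.1, fun ht => (this.2 ht).trans (image_mono (hwb w hw))⟩
  refine ⟨max K₁ K, lt_max_of_lt_left hK₁, ?_, ?_⟩
  · intro g hg w hw
    by_cases he : EqOn g₁ g (ball z R)
    · have : ednorm g w = ednorm g₁ w := by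
        have hev : ∀ᶠ y in 𝓝[≠] w, g₁ y = g y :=
          Eventually.filter_mono nhdsWithin_le_nhds
            (Filter.mem_of_superset (isOpen_ball.mem_nhds (hrsub hw)) he)
        unfold ednorm
        apply limsup_congr
        filter_upwards [hev] with y hy
        rw [hy, he (hrsub hw)]
      rw [this]
      exact (hb₁ w hw).trans (ENNReal.ofReal_le_ofReal (le_max_left _ _))
    · exact (hoth g hg he w hw).1.trans (ENNReal.ofReal_le_ofReal (le_max_right _ _))
  · obtain ⟨t, -, htf, htc⟩ := (isCompact_univ (X := 𝕊)).finite_cover_balls (half_pos hε)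
    set A := {g₀ : ball z r → 𝕊 | ∃ g ∈ F, (∀ w : ball z r, g₀ w = g w) ∧
        (∃ w ∈ ball z r, ENNReal.ofReal τ ≤ ednorm g w) ∧ ¬ EqOn g₁ g (ball z R)} with hA
    have hAf : A.Finite := by
      have hch : ∀ g₀ : ball z r → 𝕊, ∃ c : 𝕊, g₀ ∈ A → c ∈ t ∧ ∃ g ∈ F,
          (∀ w : ball z r, g₀ w = g w) ∧ ∃ w ∈ ball z r, dist (g w) c < ε / 2 ∧
            ball (g w) ε ⊆ g '' ball z R := by
        intro g₀
        by_cases hg₀ : g₀ ∈ A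
        · obtain ⟨g, hg, hgg, ⟨w, hw, hτw⟩, hne⟩ := hg₀
          have := htc (mem_univ (g w))
          simp only [mem_iUnion] at this
          obtain ⟨c, hct, hc⟩ := this
          exact ⟨c, fun _ => ⟨hct, g, hg, hgg, w, hw, hc, (hoth g hg hne w hw).2 hτw⟩⟩
        · exact ⟨z, fun h => absurd h hg₀⟩
      choose c hc using hch
      refine Set.Finite.of_injOn (f := c) (t := t) (fun g₀ h => (hc g₀ h).1) ?_ htf
      intro a ha b hb hab
      obtain ⟨-, g, hg, hgg, w, hw, hwc, hws⟩ := hc a ha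
      obtain ⟨-, g', hg', hgg', w', hw', hwc', -⟩ := hc b hb
      rw [← hab] at hwc'
      have hdist : g' w' ∈ ball (g w) ε := by
        rw [mem_ball]
        have := dist_triangle_right (g' w') (g w) (c a)
        linarith
      obtain ⟨y, hy, hyx⟩ := hws hdist
      have he := hmeet g hg g' hg' y hy w' (hrsub hw') hyx
      funext x
      rw [hgg, hgg', he (hrsub x.2)]
    refine (hAf.union (Set.finite_singleton (fun w : ball z r => g₁ w))).subset ?_
    rintro g₀ ⟨g, hg, hgg, hw⟩
    by_cases he : EqOn g₁ g (ball z R)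
    · right
      rw [mem_singleton_iff]
      funext x
      rw [hgg, he (hrsub x.2)]
    · left
      exact ⟨g, hg, hgg, hw, he⟩

end SphereModel

/-- **Lemma 2.2.** For `0 < r < R` and `N ≥ 1`, the spherical derivatives of all
holomorphic inverse branches of `f^{-n}`, `n ≤ N`, on `B(z,R)` are uniformly bounded on
`B(z,r)`; moreover all but finitely many of these branches have derivative smaller
than `τ` on `B(z,r)`. -/
theorem inverse_branch_derivative_bounds {𝕊 : Type} [MetricSpace 𝕊] [CompactSpace 𝕊]
    (S : SphereModel 𝕊) (f : 𝕊 → 𝕊) (hf : S.MeroOrRat f)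
    (z : 𝕊) (R τ r : ℝ) (hR : 0 < R) (hτ : 0 < τ) (N : ℕ) (hN : 1 ≤ N)
    (hr : 0 < r) (hrR : r < R) :
    ∃ M > 0,
      (∀ n ≤ N, ∀ g : 𝕊 → 𝕊, IsInvBranch S f n (Metric.ball z R) g →
        ∀ w ∈ Metric.ball z r, ednorm g w < ENNReal.ofReal M) ∧
      Set.Finite {g₀ : Metric.ball z r → 𝕊 | ∃ n ≤ N, ∃ g : 𝕊 → 𝕊,
        IsInvBranch S f n (Metric.ball z R) g ∧ (∀ w : Metric.ball z r, g₀ w = g w) ∧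
        ∃ w ∈ Metric.ball z r, ENNReal.ofReal τ ≤ ednorm g w} := by

  have key : ∀ n : ℕ, ∃ M > 0, (∀ g ∈ {g | IsInvBranch S f n (Metric.ball z R) g},
      ∀ w ∈ ball z r, ednorm g w ≤ ENNReal.ofReal M) ∧
      Set.Finite {g₀ : ball z r → 𝕊 | ∃ g ∈ {g | IsInvBranch S f n (Metric.ball z R) g},
        (∀ w : ball z r, g₀ w = g w) ∧
        ∃ w ∈ ball z r, ENNReal.ofReal τ ≤ ednorm g w} := by
    intro n
    refine S.family_bound hr hrR hτ _ (fun g hg => hg.1) ?_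
    intro g hg g' hg' w hw w' hw' h
    rw [← hg.2 w hw, h, hg'.2 w' hw']
  choose M hM hb hfin using key
  have hsum : ∀ n ≤ N, M n ≤ ∑ i ∈ Finset.range (N + 1), M i := fun n hn =>
    Finset.single_le_sum (f := M) (fun i _ => (hM i).le) (Finset.mem_range.2 (by omega))
  have hpos : 0 < ∑ i ∈ Finset.range (N + 1), M i := lt_of_lt_of_le (hM 0) (hsum 0 (by omega))
  refine ⟨∑ i ∈ Finset.range (N + 1), M i + 1, by linarith, ?_, ?_⟩
  · intro n hn g hg w hw
    refine lt_of_le_of_lt (hb n g hg w hw) ?_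
    rw [ENNReal.ofReal_lt_ofReal_iff (by linarith)]
    linarith [hsum n hn]
  · refine ((Set.finite_Iic N).biUnion fun n _ => hfin n).subset ?_
    rintro g₀ ⟨n, hn, g, hg, h1, h2⟩
    simp only [Set.mem_iUnion]
    exact ⟨n, hn, g, hg, h1, h2⟩
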